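/- arXiv:2105.04896 — 2 statements merged into one kernel-verified Lean document; each statement's English description precedes it below -/
import Mathlib

section
/- Let M be a random variable with values in the nonnegative integers and let c ∈ ℝ. If E(M·1{M ≤ n}) = log n + c + o(1) as n → ∞, then P(M ≥ n) ∼ 1/n as n → ∞, i.e. lim_{n→∞} n·P(M ≥ n) = 1. -/
open MeasureTheory ProbabilityTheory Filter

/-- A null sequence which is eventually nonincreasing is eventually nonnegative. -/
lemma eventually_nonneg_of_eventually_succ_le {v : ℕ → ℝ} (hv : Tendsto v atTop (nhds 0))
    (h : ∀ᶠ n in atTop, v (n + 1) ≤ v n) : ∀ᶠ n in atTop, 0 ≤ v n := by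
  obtain ⟨N, hN⟩ := eventually_atTop.1 h
  filter_upwards [eventually_ge_atTop N] with n hn
  refine le_of_tendsto hv ?_
  filter_upwards [eventually_ge_atTop n] with m hm
  induction m, hm using Nat.le_induction with
  | base => exact le_rfl
  | succ m hm ih => exact (hN m (hn.trans hm)).trans ih

/-- The `0/0` case of the Stolz–Cesàro theorem. -/
lemma tendsto_div_of_tendsto_sub_div_sub {u d : ℕ → ℝ} {l : ℝ} (hu : Tendsto u atTop (nhds 0))
    (hd : Tendsto d atTop (nhds 0)) (hpos : ∀ n, 0 < d n) (hanti : ∀ n, d (n + 1) < d n)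
    (h : Tendsto (fun n => (u n - u (n + 1)) / (d n - d (n + 1))) atTop (nhds l)) :
    Tendsto (fun n => u n / d n) atTop (nhds l) := by
  have key (a b : ℝ) : Tendsto (fun n => a * u n + b * d n) atTop (nhds 0) := by
    simpa using (hu.const_mul a).add (hd.const_mul b)
  refine tendsto_order.2 ⟨fun a ha => ?_, fun a ha => ?_⟩
  · obtain ⟨b, hab, hbl⟩ := exists_between ha
    have := eventually_nonneg_of_eventually_succ_le (key 1 (-b)) (by
      filter_upwards [h.eventually_const_lt hbl] with n hn
      rw [lt_div_iff₀ (sub_pos.2 (hanti n))] at hn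
      linarith)
    filter_upwards [this] with n hn
    rw [lt_div_iff₀ (hpos n)]
    nlinarith [hpos n]
  · obtain ⟨b, hlb, hba⟩ := exists_between ha
    have := eventually_nonneg_of_eventually_succ_le (key (-1) b) (by
      filter_upwards [h.eventually_lt_const hlb] with n hn
      rw [div_lt_iff₀ (sub_pos.2 (hanti n))] at hn
      linarith)
    filter_upwards [this] with n hn
    rw [div_lt_iff₀ (hpos n)]
    nlinarith [hpos n]

lemma tendsto_add_two_mul_log_succ_sub_log :
    Tendsto (fun n : ℕ => ((n : ℝ) + 2) * (Real.log ((n + 1 : ℕ) : ℝ) - Real.log n))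
      atTop (nhds 1) := by
  have h1 : Tendsto (fun n : ℕ => (n : ℝ) * Real.log (1 + 1 / (n : ℝ))) atTop (nhds 1) :=
    (Real.tendsto_mul_log_one_add_div_atTop 1).comp tendsto_natCast_atTop_atTop
  have h2 : Tendsto (fun n : ℕ => 1 + 2 / (n : ℝ)) atTop (nhds 1) := by
    simpa using (tendsto_const_div_atTop_nhds_zero_nat (2 : ℝ)).const_add 1
  have h3 := h2.mul h1
  rw [one_mul] at h3
  refine h3.congr' ?_
  filter_upwards [eventually_gt_atTop 0] with n hn
  have hn' : (0 : ℝ) < n := by exact_mod_cast hn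
  rw [← Real.log_div (by positivity) hn'.ne']
  have : ((n + 1 : ℕ) : ℝ) / n = 1 + 1 / n := by push_cast; field_simp
  rw [this]
  field_simp

section

variable {Ω : Type*} [MeasurableSpace Ω] {P : Measure Ω} [IsProbabilityMeasure P] {M : Ω → ℕ}

lemma tendsto_measureReal_le_atTop_zero (hM : Measurable M) :
    Tendsto (fun n : ℕ => P.real {ω | n ≤ M ω}) atTop (nhds 0) := by
  have h := tendsto_measure_iInter_atTop (μ := P) (s := fun n : ℕ => {ω | n ≤ M ω})
    (fun n => (measurableSet_le measurable_const hM).nullMeasurableSet)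
    (fun m n hmn ω hω => le_trans hmn hω) ⟨0, measure_ne_top _ _⟩
  have hempty : ⋂ n : ℕ, {ω | n ≤ M ω} = ∅ := by
    ext ω
    simpa using ⟨M ω + 1, Nat.lt_succ_self _⟩
  rw [hempty, measure_empty] at h
  exact (ENNReal.tendsto_toReal ENNReal.zero_ne_top).comp h

lemma integrable_truncation (hM : Measurable M) (n : ℕ) :
    Integrable (fun ω => if M ω ≤ n then (M ω : ℝ) else 0) P := by
  refine Integrable.of_bound (C := n) (Measurable.aestronglyMeasurable ?_) (ae_of_all _ fun ω => ?_)
  · exact Measurable.ite (measurableSet_le hM measurable_const)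
      (measurable_from_nat.comp hM) measurable_const
  · split_ifs with hω
    · simpa using hω
    · simp

lemma integral_truncation_succ_sub (hM : Measurable M) (n : ℕ) :
    (∫ ω, (if M ω ≤ n + 1 then (M ω : ℝ) else 0) ∂P) - ∫ ω, (if M ω ≤ n then (M ω : ℝ) else 0) ∂P
      = (n + 1) * (P.real {ω | n + 1 ≤ M ω} - P.real {ω | n + 2 ≤ M ω}) := by
  have hsub : {ω | n + 2 ≤ M ω} ⊆ {ω | n + 1 ≤ M ω} := fun ω hω =>
    (Nat.le_succ (n + 1)).trans hω
  have hm (k : ℕ) : MeasurableSet {ω | k ≤ M ω} := measurableSet_le measurable_const hM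
  rw [← integral_sub (integrable_truncation hM _) (integrable_truncation hM _),
    ← measureReal_sdiff hsub (hm _), mul_comm, ← smul_eq_mul,
    ← integral_indicator_const _ ((hm _).diff (hm _))]
  congr 1 with ω
  simp only [Set.indicator, Set.mem_sdiff, Set.mem_ofPred_eq]
  rcases lt_trichotomy (M ω) (n + 1) with hlt | heq | hgt
  · simp [show M ω ≤ n + 1 by lia, show M ω ≤ n by lia, show ¬ n + 1 ≤ M ω by lia]
  · simp [heq]
  · simp [show ¬ M ω ≤ n + 1 by lia, show ¬ M ω ≤ n by lia, show n + 2 ≤ M ω by lia]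

end

/-- For an `ℕ`-valued random variable `M` and `c ∈ ℝ`, if
`E(M·1{M ≤ n}) = log n + c + o(1)` as `n → ∞`, then `P(M ≥ n) ∼ 1/n` as `n → ∞`,
i.e. `n · P(M ≥ n) → 1`. -/
theorem tail_of_truncated_expectation
    {Ω : Type*} [MeasurableSpace Ω] {P : Measure Ω} [IsProbabilityMeasure P]
    (M : Ω → ℕ) (hM : Measurable M) (c : ℝ)
    (h : Tendsto (fun n : ℕ =>
        (∫ ω, (if M ω ≤ n then (M ω : ℝ) else 0) ∂P) - (Real.log n + c)) atTop (nhds 0)) :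
    Tendsto (fun n : ℕ => (n : ℝ) * (P {ω | n ≤ M ω}).toReal) atTop (nhds 1) := by
  set e : ℕ → ℝ := fun n =>
    (∫ ω, (if M ω ≤ n then (M ω : ℝ) else 0) ∂P) - (Real.log n + c) with he
  set q : ℕ → ℝ := fun n => P.real {ω | n ≤ M ω} with hq
  have hd : Tendsto (fun n : ℕ => 1 / ((n : ℝ) + 1)) atTop (nhds 0) :=
    tendsto_one_div_add_atTop_nhds_zero_nat
  have hu : Tendsto (fun n : ℕ => q (n + 1) + e n * (1 / ((n : ℝ) + 1))) atTop (nhds 0) := by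
    have hq0 : Tendsto q atTop (nhds 0) := tendsto_measureReal_le_atTop_zero hM
    simpa using ((tendsto_add_atTop_iff_nat 1).2 hq0).add (h.mul hd)
  have hstep (n : ℕ) : e (n + 1) - e n + (Real.log ((n + 1 : ℕ) : ℝ) - Real.log n)
      = (n + 1) * (q (n + 1) - q (n + 2)) := by
    rw [hq, ← integral_truncation_succ_sub hM n]
    simp only [he]
    ring
  have hquot := tendsto_div_of_tendsto_sub_div_sub (l := 1) hu hd (fun n => by positivity)
    (fun n => by push_cast; gcongr; linarith) (by
      have hlim := ((tendsto_add_atTop_iff_nat 1).2 h).add tendsto_add_two_mul_log_succ_sub_log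
      rw [zero_add] at hlim
      refine hlim.congr fun n => ?_
      have hn : (0 : ℝ) < n + 1 := by positivity
      have hden : 1 / ((n : ℝ) + 1) - 1 / (((n + 1 : ℕ) : ℝ) + 1) = 1 / ((n + 1) * (n + 2)) := by
        push_cast
        field_simp
        ring
      have hq' : q (n + 1) = q (n + 2)
          + (e (n + 1) - e n + (Real.log ((n + 1 : ℕ) : ℝ) - Real.log n)) / (n + 1) := by
        rw [hstep]
        field_simp
        ring
      rw [hden, show n + 1 + 1 = n + 2 from rfl, hq']
      change e (n + 1) + _ = _
      generalize Real.log ((n + 1 : ℕ) : ℝ) - Real.log n = L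
      push_cast
      field_simp
      ring)
  refine (tendsto_add_atTop_iff_nat 1).1 ?_
  have hfin := hquot.sub h
  rw [sub_zero] at hfin
  refine hfin.congr fun n => ?_
  have hn : (0 : ℝ) < n + 1 := by positivity
  change _ - e n = ((n + 1 : ℕ) : ℝ) * q (n + 1)
  push_cast
  field_simp
  ring
end

section
/- Let ν be the exponential distribution with rate 1 on ℝ (supported on [0,∞)). Then the mixture measure ν.bind(s ↦ gaussianReal(2s, 2s)), i.e. the law of √2·B_T + 2T where B is a standard Brownian motion and T an independent exponential random variable of parameter 1, equals the measure μ with density f with respect to Lebesgue measure, where f(x) = (1−p)(√2+1)e^{(√2+1)x} for x < 0 and f(x) = p(√2−1)e^{−(√2−1)x} for x ≥ 0, with p = (2+√2)/4. -/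
open MeasureTheory ProbabilityTheory
open scoped ENNReal

/-- The step density of the branching random walk of death positions of the boundary-case
binary branching Brownian motion: with `p = (2+√2)/4`,
`f(x) = (1-p)(√2+1)e^{(√2+1)x}` for `x < 0` and `f(x) = p(√2-1)e^{-(√2-1)x}` for `x ≥ 0`. -/
noncomputable def stepDensity (x : ℝ) : ℝ :=
  if x < 0 then (1 - (2 + Real.sqrt 2) / 4) * (Real.sqrt 2 + 1) * Real.exp ((Real.sqrt 2 + 1) * x)
  else ((2 + Real.sqrt 2) / 4) * (Real.sqrt 2 - 1) * Real.exp (-(Real.sqrt 2 - 1) * x)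

open Complex in
/-- The characteristic function of a mixture is the mixture of the characteristic functions. -/
lemma charFun_kernel_bind {α : Type*} [MeasurableSpace α] (μ : Measure α) [IsFiniteMeasure μ]
    (κ : Kernel α ℝ) [IsFiniteKernel κ] (t : ℝ) :
    charFun (μ.bind κ) t = ∫ a, charFun (κ a) t ∂μ := by
  simp only [charFun_apply_real]
  refine Kernel.integral_comp (η := κ) (κ := Kernel.const Unit μ) (a := ())
    (f := fun x : ℝ => exp (t * x * I)) ?_
  refine Integrable.of_bound (C := 1) (by fun_prop) (ae_of_all _ fun x => ?_)
  rw [← ofReal_mul, norm_exp_ofReal_mul_I]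

/-- Integration against the exponential distribution. -/
lemma integral_expMeasure {E : Type*} [NormedAddCommGroup E] [NormedSpace ℝ E] {r : ℝ}
    (hr : 0 < r) (g : ℝ → E) :
    ∫ s, g s ∂(expMeasure r) = ∫ s in Set.Ioi 0, (r * Real.exp (-(r * s))) • g s := by
  have hpdf : Measurable (exponentialPDF r) := (measurable_exponentialPDFReal r).ennreal_ofReal
  change ∫ s, g s ∂(volume.withDensity (exponentialPDF r)) = _
  rw [integral_withDensity_eq_integral_toReal_smul hpdf
    (ae_of_all _ fun _ => ENNReal.ofReal_lt_top), ← integral_Ici_eq_integral_Ioi,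
    ← integral_indicator measurableSet_Ici]
  congr with s
  by_cases hs : 0 ≤ s
  · simp [exponentialPDF_of_nonneg hs, hs, ENNReal.toReal_ofReal, hr.le, Real.exp_nonneg]
  · simp [exponentialPDF_of_neg (not_le.1 hs), hs]

/-- The kernel `s ↦ gaussianReal (2s) (2s)`. -/
noncomputable def gaussianTimeKernel : Kernel ℝ ℝ where
  toFun s := gaussianReal (2 * s) (Real.toNNReal (2 * s))
  measurable' := measurable_gaussianReal.comp
    (f := fun s : ℝ => (2 * s, Real.toNNReal (2 * s))) (by fun_prop)

instance : IsMarkovKernel gaussianTimeKernel :=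
  ⟨fun _ => inferInstanceAs (IsProbabilityMeasure (gaussianReal _ _))⟩

open Complex in
lemma charFun_expMeasure_bind_gaussianTimeKernel (t : ℝ) :
    charFun ((expMeasure 1).bind gaussianTimeKernel) t = 1 / (1 - 2 * t * I + t ^ 2) := by
  have := isProbabilityMeasure_expMeasure one_pos
  have hre : (-(1 - 2 * t * I + t ^ 2) : ℂ).re < 0 := by
    simp [← ofReal_pow]
    nlinarith [sq_nonneg t]
  rw [charFun_kernel_bind, integral_expMeasure one_pos]
  calc
    _ = ∫ s : ℝ in Set.Ioi 0, exp (-(1 - 2 * t * I + t ^ 2) * s) := by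
      refine setIntegral_congr_fun measurableSet_Ioi fun s hs => ?_
      have hs' : (0 : ℝ) ≤ 2 * s := by have := Set.mem_Ioi.1 hs; positivity
      change (1 * Real.exp (-(1 * s))) • charFun (gaussianReal _ _) t = _
      rw [charFun_gaussianReal, show ((Real.toNNReal (2 * s) : NNReal) : ℂ) = ((2 * s : ℝ) : ℂ) by
        rw [← Real.coe_toNNReal _ hs']; simp, real_smul]
      push_cast
      rw [one_mul, ← exp_add]
      ring_nf
    _ = _ := by
      rw [integral_exp_mul_complex_Ioi hre]
      simp [neg_div_neg_eq, -neg_add_rev, -neg_sub]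

lemma measurable_stepDensity : Measurable stepDensity :=
  Measurable.ite measurableSet_Iio (by fun_prop) (by fun_prop)

lemma stepDensity_of_neg {x : ℝ} (hx : x < 0) :
    stepDensity x = √2 / 4 * Real.exp ((√2 + 1) * x) := by
  rw [stepDensity, if_pos hx]
  congr 1
  linear_combination (-1 / 4) * Real.sq_sqrt (zero_le_two (α := ℝ))

lemma stepDensity_of_nonneg {x : ℝ} (hx : 0 ≤ x) :
    stepDensity x = √2 / 4 * Real.exp (-(√2 - 1) * x) := by
  rw [stepDensity, if_neg hx.not_gt]
  congr 1
  linear_combination (1 / 4) * Real.sq_sqrt (zero_le_two (α := ℝ))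

lemma stepDensity_nonneg (x : ℝ) : 0 ≤ stepDensity x := by
  rcases lt_or_ge x 0 with hx | hx
  · rw [stepDensity_of_neg hx]; positivity
  · rw [stepDensity_of_nonneg hx]; positivity

lemma one_lt_sqrt_two : 1 < √(2 : ℝ) := Real.lt_sqrt_of_sq_lt (by norm_num)

lemma integrable_stepDensity : Integrable stepDensity := by
  have h := one_lt_sqrt_two
  rw [← integrableOn_univ, ← Set.Iio_union_Ici (a := (0 : ℝ)), integrableOn_union]
  constructor
  · refine IntegrableOn.congr_fun ?_ (fun x hx => (stepDensity_of_neg hx).symm) measurableSet_Iio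
    exact ((integrableOn_exp_mul_Iic (by linarith) 0).mono_set Set.Iio_subset_Iic_self).const_mul _
  · refine IntegrableOn.congr_fun ?_ (fun x hx => (stepDensity_of_nonneg hx).symm)
      measurableSet_Ici
    exact ((integrableOn_Ici_iff_integrableOn_Ioi).2
      (integrableOn_exp_mul_Ioi (by linarith) 0)).const_mul _

open Complex in
lemma charFun_withDensity_stepDensity (t : ℝ) :
    charFun (volume.withDensity fun x => ENNReal.ofReal (stepDensity x)) t =
      1 / (1 - 2 * t * I + t ^ 2) := by
  have h := one_lt_sqrt_two
  have hneg : 0 < ((√2 + 1 : ℝ) + t * I : ℂ).re := by simp; positivity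
  have hpos : (-(√2 - 1 : ℝ) + t * I : ℂ).re < 0 := by simpa using h
  rw [charFun_apply_real, integral_withDensity_eq_integral_toReal_smul
    measurable_stepDensity.ennreal_ofReal (ae_of_all _ fun _ => ENNReal.ofReal_lt_top)]
  simp_rw [ENNReal.toReal_ofReal (stepDensity_nonneg _)]
  have hint : Integrable fun x : ℝ => stepDensity x • exp (t * x * I) := by
    refine integrable_stepDensity.norm.mono
      (measurable_stepDensity.smul (by fun_prop)).aestronglyMeasurable (ae_of_all _ fun x => ?_)
    rw [norm_smul, ← ofReal_mul, norm_exp_ofReal_mul_I, mul_one, norm_norm]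
  rw [← integral_add_compl measurableSet_Iio hint (s := Set.Iio 0), Set.compl_Iio]
  have hleft : ∫ x : ℝ in Set.Iio 0, stepDensity x • exp (t * x * I) =
      √2 / 4 * (1 / ((√2 + 1 : ℝ) + t * I)) := by
    calc
      _ = ∫ x : ℝ in Set.Iio 0, (√2 / 4 : ℂ) * exp (((√2 + 1 : ℝ) + t * I) * x) := by
        refine setIntegral_congr_fun measurableSet_Iio fun x hx => ?_
        simp only [stepDensity_of_neg hx, real_smul]
        push_cast
        rw [mul_assoc, ← exp_add]
        ring_nf
      _ = _ := by
        rw [integral_const_mul, ← integral_Iic_eq_integral_Iio, integral_exp_mul_complex_Iic hneg]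
        simp
  have hright : ∫ x : ℝ in Set.Ici 0, stepDensity x • exp (t * x * I) =
      √2 / 4 * (-1 / (-(√2 - 1 : ℝ) + t * I)) := by
    calc
      _ = ∫ x : ℝ in Set.Ici 0, (√2 / 4 : ℂ) * exp ((-(√2 - 1 : ℝ) + t * I) * x) := by
        refine setIntegral_congr_fun measurableSet_Ici fun x hx => ?_
        simp only [stepDensity_of_nonneg hx, real_smul]
        push_cast
        rw [mul_assoc, ← exp_add]
        ring_nf
      _ = _ := by
        rw [integral_const_mul, integral_Ici_eq_integral_Ioi, integral_exp_mul_complex_Ioi hpos]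
        simp
  have hA : ((√2 + 1 : ℝ) + t * I : ℂ) ≠ 0 := fun h0 => by
    rw [h0, zero_re] at hneg
    exact hneg.false
  have hB : (-(√2 - 1 : ℝ) + t * I : ℂ) ≠ 0 := fun h0 => by
    rw [h0, zero_re] at hpos
    exact hpos.false
  have hsq : ((√2 : ℝ) : ℂ) ^ 2 = 2 := by
    rw [← ofReal_pow, Real.sq_sqrt zero_le_two, ofReal_ofNat]
  have hfactor : (1 - 2 * t * I + t ^ 2 : ℂ) =
      -(((√2 + 1 : ℝ) + t * I) * (-(√2 - 1 : ℝ) + t * I)) := by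
    push_cast
    linear_combination t ^ 2 * I_sq - hsq
  rw [hleft, hright, hfactor]
  field_simp
  push_cast
  linear_combination (-2) * hsq

/-- The law of `√2·B_T + 2T`, with `B` a standard Brownian motion and `T` an independent
exponential random variable of parameter `1` — i.e. the mixture of the Gaussian measures
`gaussianReal (2s) (2s)` over an exponential random parameter `s` of rate `1` — is the
measure with density `stepDensity` with respect to Lebesgue measure. -/
theorem exponential_mixture_of_gaussians_eq_stepMeasure :
    (expMeasure 1).bind (fun s : ℝ => gaussianReal (2 * s) (Real.toNNReal (2 * s)))
      = MeasureTheory.volume.withDensity fun x => ENNReal.ofReal (stepDensity x) := by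
  have := isProbabilityMeasure_expMeasure one_pos
  have := isFiniteMeasure_withDensity_ofReal integrable_stepDensity.2
  change (expMeasure 1).bind gaussianTimeKernel = _
  refine Measure.ext_of_charFun (funext fun t => ?_)
  rw [charFun_expMeasure_bind_gaussianTimeKernel, charFun_withDensity_stepDensity]
end
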